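/- Let f ∈ H²(𝔻²) with f(0) ≠ 0 and let n ≥ 0. Suppose p_n*[f] = q + r where q, r ∈ P_n, r(0) = 0, and ⟨qf, rf⟩ = 0. Then r ≡ 0 and p_n*[f] = q. -/

import Mathlib

noncomputable section

open Finset

/-- Coefficients of a formal power series in two variables `z, w`
(the coefficient of `z^j w^k` is the value at `(j, k)`). -/
abbrev Coef := ℕ × ℕ → ℂ

/-- Coefficients of a formal power series in one variable. -/
abbrev Coef1 := ℕ → ℂ

/-- Membership in the Hardy space `H²(𝔻²)`: square-summable coefficients. -/
def MemH2 (f : Coef) : Prop := Summable (fun jk : ℕ × ℕ => ‖f jk‖ ^ 2)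

/-- Membership in the Hardy space `H²(𝔻)`. -/
def MemH2₁ (f : Coef1) : Prop := Summable (fun j : ℕ => ‖f j‖ ^ 2)

/-- The `H²(𝔻²)` inner product `⟨f, g⟩ = ∑ a_{jk} conj (b_{jk})`. -/
def Hinner (f g : Coef) : ℂ := ∑' jk : ℕ × ℕ, f jk * (starRingEnd ℂ) (g jk)

/-- The `H²(𝔻²)` norm. -/
def Hnorm (f : Coef) : ℝ := Real.sqrt (∑' jk : ℕ × ℕ, ‖f jk‖ ^ 2)

/-- The `H²(𝔻)` norm. -/
def Hnorm1 (f : Coef1) : ℝ := Real.sqrt (∑' j : ℕ, ‖f j‖ ^ 2)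

/-- The constant function `1` as an element of `H²(𝔻²)`. -/
def oneH : Coef := fun jk => if jk = (0, 0) then 1 else 0

/-- The constant function `1` as an element of `H²(𝔻)`. -/
def oneH1 : Coef1 := fun j => if j = 0 then 1 else 0

/-- Cauchy product `q·f` of two formal power series in two variables
(used for multiplication of `f ∈ H²(𝔻²)` by a polynomial `q`). -/
def pmul (q f : Coef) : Coef := fun jk =>
  ∑ a ∈ range (jk.1 + 1), ∑ b ∈ range (jk.2 + 1), q (a, b) * f (jk.1 - a, jk.2 - b)

/-- Multiplication of a one-variable power series by a one-variable polynomial. -/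
def pmul1 (q : Polynomial ℂ) (f : Coef1) : Coef1 := fun j =>
  ∑ a ∈ range (j + 1), q.coeff a * f (j - a)

/-- Degree-lexicographic enumeration of the monomials in `z, w`:
`chi 0 = (0,0) ↔ 1`, `chi 1 = (1,0) ↔ z`, `chi 2 = (0,1) ↔ w`,
`chi 3 = (2,0) ↔ z²`, `chi 4 = (1,1) ↔ zw`, `chi 5 = (0,2) ↔ w²`, … -/
def chi : ℕ → ℕ × ℕ
  | 0 => (0, 0)
  | n + 1 =>
    let p := chi n
    if p.1 = 0 then (p.2 + 1, 0) else (p.1 - 1, p.2 + 1)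

/-- The monomial `z^(ab.1) w^(ab.2)` as a coefficient function. -/
def mono (ab : ℕ × ℕ) : Coef := fun jk => if jk = ab then 1 else 0

/-- `p` lies in `P_n = span {χ_0, …, χ_n}`. -/
def inPn (n : ℕ) (p : Coef) : Prop := ∀ ab, p ab ≠ 0 → ∃ k ≤ n, chi k = ab

/-- `p` is a (two-variable) polynomial: finitely many nonzero coefficients. -/
def IsPoly2 (p : Coef) : Prop := (Function.support p).Finite

/-- Evaluation of a power series at the point `(z, w)`
(absolutely convergent for `f ∈ H²(𝔻²)` and `(z,w)` in the open bidisk,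
and for any polynomial at any point). -/
def heval (f : Coef) (z w : ℂ) : ℂ := ∑' jk : ℕ × ℕ, f jk * z ^ jk.1 * w ^ jk.2

/-- `p` is the `n`-th optimal polynomial approximant to `1/f`:
`p ∈ P_n` and `p` minimizes `‖qf - 1‖` over `q ∈ P_n`. -/
def IsOPA (f : Coef) (n : ℕ) (p : Coef) : Prop :=
  inPn n p ∧ ∀ q : Coef, inPn n q →
    Hnorm (pmul p f - oneH) ≤ Hnorm (pmul q f - oneH)

/-- `q` has bidegree `(N, M)`: degree `N` in `z` and degree `M` in `w`. -/
def HasBidegree (q : Coef) (N M : ℕ) : Prop :=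
  (∀ a b : ℕ, q (a, b) ≠ 0 → a ≤ N ∧ b ≤ M) ∧ (∃ b, q (N, b) ≠ 0) ∧ (∃ a, q (a, M) ≠ 0)

/-- Reflection of a polynomial of bidegree `(N, M)`:
the coefficient of `z^j w^k` is `conj` of the coefficient of `z^(N-j) w^(M-k)`. -/
def reflPoly (N M : ℕ) (q : Coef) : Coef := fun jk =>
  if jk.1 ≤ N ∧ jk.2 ≤ M then (starRingEnd ℂ) (q (N - jk.1, M - jk.2)) else 0

/-- The degree-lexicographic index of the monomial `z^(ab.1) w^(ab.2)`
(the inverse of `chi`). -/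
def lexIndex (ab : ℕ × ℕ) : ℕ := (ab.1 + ab.2) * (ab.1 + ab.2 + 1) / 2 + ab.2

/-- `pound k j` = the degree-lexicographic index `£(k,j)` of the monomial `(χ_k)^j`. -/
def pound (k j : ℕ) : ℕ := lexIndex (j * (chi k).1, j * (chi k).2)

/-- The linear factor `z - α` as a coefficient function. -/
def linZ (α : ℂ) : Coef := fun jk => if jk = (1, 0) then 1 else if jk = (0, 0) then -α else 0

/-- The linear factor `w - β` as a coefficient function. -/
def linW (β : ℂ) : Coef := fun jk => if jk = (0, 1) then 1 else if jk = (0, 0) then -β else 0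

/-!
If `rf` is orthogonal to `qf` and `(rf)(0) = 0`, then `rf` is orthogonal to `qf - 1`, so
`‖(q + r)f - 1‖² = ‖qf - 1‖² + ‖rf‖²`. Hence `q + r` can do no worse than `q` only if `rf = 0`, and
then `r = 0` because formal power series over `ℂ` form an integral domain.
-/

lemma eq_zero_of_inner_eq_zero_of_norm_add_le {𝕜 E : Type*} [RCLike 𝕜] [NormedAddCommGroup E]
    [InnerProductSpace 𝕜 E] {x y : E} (hxy : inner 𝕜 x y = 0) (hle : ‖x + y‖ ≤ ‖x‖) : y = 0 := by
  have pythagoras := norm_add_sq_eq_norm_sq_add_norm_sq_of_inner_eq_zero x y hxy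
  have hy : ‖y‖ * ‖y‖ ≤ 0 := by
    linarith [mul_self_le_mul_self (norm_nonneg (x + y)) hle]
  exact norm_eq_zero.mp (mul_self_eq_zero.mp (hy.antisymm (mul_self_nonneg _)))

/-- The formal power series in `ℂ⟦w⟧⟦z⟧` with coefficient family `f`; it turns `pmul` into
multiplication in an integral domain. The outer variable is `z`, the inner one `w`. -/
def toPowerSeries (f : Coef) : PowerSeries (PowerSeries ℂ) :=
  PowerSeries.mk fun j => PowerSeries.mk fun k => f (j, k)

lemma toPowerSeries_eq_zero_iff {f : Coef} : toPowerSeries f = 0 ↔ f = 0 := by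
  simp [toPowerSeries, PowerSeries.ext_iff, funext_iff]

lemma toPowerSeries_pmul (q f : Coef) :
    toPowerSeries (pmul q f) = toPowerSeries q * toPowerSeries f := by
  ext j k
  simp [toPowerSeries, pmul, PowerSeries.coeff_mul,
    Finset.Nat.sum_antidiagonal_eq_sum_range_succ_mk]

lemma pmul_eq_zero_iff {q f : Coef} : pmul q f = 0 ↔ q = 0 ∨ f = 0 := by
  rw [← toPowerSeries_eq_zero_iff, toPowerSeries_pmul, mul_eq_zero, toPowerSeries_eq_zero_iff,
    toPowerSeries_eq_zero_iff]

lemma pmul_apply_zero (q f : Coef) : pmul q f (0, 0) = q (0, 0) * f (0, 0) := by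
  simp [pmul]

lemma add_pmul (q r f : Coef) : pmul (q + r) f = pmul q f + pmul r f := by
  ext jk
  simp [pmul, add_mul, sum_add_distrib]

lemma pmul_apply_eq_sum_Iic (q f : Coef) (jk : ℕ × ℕ) :
    pmul q f jk = ∑ ab ∈ Iic jk, q ab * f (jk - ab) := by
  rw [← Iic_product_Iic, sum_product]
  simp only [pmul, Nat.range_succ_eq_Iic]
  rfl

lemma pmul_single_apply (ab : ℕ × ℕ) (c : ℂ) (f : Coef) (jk : ℕ × ℕ) :
    pmul (Finsupp.single ab c) f jk = if ab ≤ jk then c * f (jk - ab) else 0 := by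
  simp [pmul_apply_eq_sum_Iic, Finsupp.single_apply, ite_mul]

lemma inPn.isPoly2 {n : ℕ} {p : Coef} (hp : inPn n p) : IsPoly2 p :=
  ((Set.finite_Iic n).image chi).subset hp

lemma memH2_iff_memℓp {f : Coef} : MemH2 f ↔ Memℓp f 2 := by
  simp [MemH2, memℓp_gen_iff]

lemma memH2_oneH : MemH2 oneH :=
  summable_of_ne_finset_zero (s := {(0, 0)}) fun jk hjk => by
    simp [oneH, Finset.notMem_singleton.mp hjk]

lemma hinner_oneH_left (f : Coef) : Hinner oneH f = starRingEnd ℂ (f (0, 0)) := by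
  simp [Hinner, oneH]

namespace MemH2

variable {f g : Coef}

protected lemma add (hf : MemH2 f) (hg : MemH2 g) : MemH2 (f + g) :=
  memH2_iff_memℓp.mpr ((memH2_iff_memℓp.mp hf).add (memH2_iff_memℓp.mp hg))

protected lemma sub (hf : MemH2 f) (hg : MemH2 g) : MemH2 (f - g) :=
  memH2_iff_memℓp.mpr ((memH2_iff_memℓp.mp hf).sub (memH2_iff_memℓp.mp hg))

lemma single_pmul (hf : MemH2 f) (ab : ℕ × ℕ) (c : ℂ) : MemH2 (pmul (Finsupp.single ab c) f) := by
  refine ((add_left_injective ab).summable_iff fun jk hjk => ?_).mp ?_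
  · have : ¬ ab ≤ jk := fun hle => hjk ⟨jk - ab, tsub_add_cancel_of_le hle⟩
    simp [pmul_single_apply, this]
  · simpa [Function.comp_def, pmul_single_apply, mul_pow] using hf.mul_left (‖c‖ ^ 2)

protected lemma pmul {q : Coef} (hf : MemH2 f) (hq : IsPoly2 q) : MemH2 (pmul q f) := by
  suffices ∀ q : ℕ × ℕ →₀ ℂ, MemH2 (pmul q f) from this (Finsupp.ofSupportFinite q hq)
  intro q
  induction q using Finsupp.induction_linear with
  | zero => simp [pmul_eq_zero_iff.mpr, MemH2]
  | add q r hq hr => simpa only [Finsupp.coe_add, add_pmul] using hq.add hr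
  | single ab c => exact hf.single_pmul ab c

/-- The element of the Hilbert space `ℓ²(ℕ × ℕ)` with coefficient family `f`, through which the
Hilbert space theory of Mathlib applies to `Hnorm` and `Hinner`. -/
def toL2 (hf : MemH2 f) : lp (fun _ : ℕ × ℕ => ℂ) 2 :=
  ⟨f, memH2_iff_memℓp.mp hf⟩

lemma norm_toL2 (hf : MemH2 f) : ‖hf.toL2‖ = Hnorm f := by
  simp [lp.norm_eq_tsum_rpow, Hnorm, toL2, Real.sqrt_eq_rpow]

-- Mathlib's inner product is conjugate-linear in the first argument, `Hinner` in the second.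
lemma inner_toL2 (hf : MemH2 f) (hg : MemH2 g) :
    inner ℂ hf.toL2 hg.toL2 = Hinner g f := by
  simp [lp.inner_eq_tsum, Hinner, toL2]

lemma hinner_sub_left {h : Coef} (hf : MemH2 f) (hg : MemH2 g) (hh : MemH2 h) :
    Hinner (f - g) h = Hinner f h - Hinner g h := by
  simp only [← inner_toL2 hh hf, ← inner_toL2 hh hg, ← inner_toL2 hh (hf.sub hg), ← inner_sub_right]
  rfl

lemma eq_zero_of_hinner_eq_zero_of_hnorm_add_le (hf : MemH2 f) (hg : MemH2 g)
    (hperp : Hinner f g = 0) (hle : Hnorm (f + g) ≤ Hnorm f) : g = 0 := by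
  have hperp' : inner ℂ hf.toL2 hg.toL2 = 0 := by
    rw [inner_eq_zero_symm, inner_toL2, hperp]
  have hle' : ‖hf.toL2 + hg.toL2‖ ≤ ‖hf.toL2‖ := by
    rwa [← norm_toL2 (hf.add hg), ← norm_toL2 hf] at hle
  exact congrArg Subtype.val (eq_zero_of_inner_eq_zero_of_norm_add_le hperp' hle')

end MemH2

theorem statement8_general {f p q r : Coef} (hf : MemH2 f) (hf0 : f ≠ 0) (hq : IsPoly2 q)
    (hr : IsPoly2 r) (hle : Hnorm (pmul p f - oneH) ≤ Hnorm (pmul q f - oneH))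
    (hsum : p = q + r) (hr0 : r (0, 0) = 0) (hperp : Hinner (pmul q f) (pmul r f) = 0) :
    r = 0 ∧ p = q := by
  have hqf := hf.pmul hq
  have hrf := hf.pmul hr
  have hperp_one : Hinner oneH (pmul r f) = 0 := by
    rw [hinner_oneH_left, pmul_apply_zero, hr0, zero_mul, map_zero]
  have hperp_error : Hinner (pmul q f - oneH) (pmul r f) = 0 := by
    rw [hqf.hinner_sub_left memH2_oneH hrf, hperp, hperp_one, sub_zero]
  have hle_error : Hnorm (pmul q f - oneH + pmul r f) ≤ Hnorm (pmul q f - oneH) := by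
    rwa [hsum, add_pmul, add_sub_right_comm] at hle
  have hrf_zero : pmul r f = 0 :=
    (hqf.sub memH2_oneH).eq_zero_of_hinner_eq_zero_of_hnorm_add_le hrf hperp_error hle_error
  have hr_zero : r = 0 := (pmul_eq_zero_iff.mp hrf_zero).resolve_right hf0
  exact ⟨hr_zero, by rw [hsum, hr_zero, add_zero]⟩

/-- If `f ∈ H²(𝔻²)` with `f(0) ≠ 0` and `p_n*[f] = q + r` with
`q, r ∈ P_n`, `r(0) = 0`, and `⟨qf, rf⟩ = 0`, then `r ≡ 0` and `p_n*[f] = q`. -/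
theorem statement8 (f : Coef) (hf : MemH2 f) (hf0 : f (0, 0) ≠ 0) (n : ℕ)
    (p q r : Coef) (hp : IsOPA f n p) (hq : inPn n q) (hr : inPn n r)
    (hsum : p = q + r) (hr0 : r (0, 0) = 0)
    (hperp : Hinner (pmul q f) (pmul r f) = 0) :
    r = 0 ∧ p = q :=
  statement8_general hf (fun h => hf0 (congrFun h (0, 0))) hq.isPoly2 hr.isPoly2 (hp.2 q hq)
    hsum hr0 hperp
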